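/- Let p be an odd prime. (1) If p ≠ 5, then the rational number ∑_{k=0}^{p−1} (205k² + 160k + 32)(−1)^k C(2k, k)^5 − 32p² − 64p³ H_{p−1} has p-adic valuation at least 7, where H_{p−1} = ∑_{k=1}^{p−1} 1/k; equivalently, ∑_{k=0}^{p−1} (205k² + 160k + 32)(−1)^k C(2k, k)^5 ≡ 32p² + 64p³ H_{p−1} (mod p^7). (2) If p > 3, then ∑_{k=0}^{(p−1)/2} (205k² + 160k + 32)(−1)^k C(2k, k)^5 ≡ 32p² (mod p^5). -/

import Mathlib

/-!
Let `F(n, k) = 8 n² C(2n, n)² (-1)^k C(n + k - 1, k)² C(2n - 1, k)`. There is a companion `G` with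
`F(n + 1, k) - F(n, k) = G(n, k) - G(n, k - 1)`, `G(n, -1) = 0`, and `F(n, n) + G(n, n)` is the
summand `(205 n² + 160 n + 32) (-1)^n C(2n, n)^5`. Telescoping over `k ≤ n` and then over `n` gives
`∑_{k<n} (205 k² + 160 k + 32) (-1)^k C(2k, k)^5 = 8 n² C(2n, n)² T(n)` with
`T(n) = ∑_{k<n} (-1)^k C(n + k - 1, k)² C(2n - 1, k)`.

For odd `n`, `C(2n, n) = 2 ∏ (1 + n/j) = 2 ∏ (1 - n²/j²)`, because `∏ (1 - n/j) = 1` over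
`0 < j < n`. Similarly `T(n) = 1 + ∑_k n²/k² (1 - 2n/k) ∏_{j<k} (1 + n/j)² (1 - 2n/j)`, and each
factor of the last product is `1 - 3n²/j² - 2n³/j³`. Write `H_s = ∑_{0<j<n} j^{-s}` and let `n = p`
be a prime greater than `5`. Then `p` divides `H_2` and `H_4`, and pairing `j` with `p - j` shows
that `p²` divides `H_3` and that `2 H_1 ≡ -p H_2` modulo `p⁴`. Modulo `p⁵` this leaves
`C(2p, p) ≡ 2 (1 - p² H_2)` and `T(p) ≡ 1 + p² H_2`, so that
`C(2p, p)² T(p) ≡ 4 (1 - p² H_2) ≡ 4 + 8 p H_1`. For `p > 3`, the divisibility of `H_2` by `p` alone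
gives `C(2p, p)² T(p) ≡ 4` modulo `p³`, and `p` divides `C(2k, k)` for `(p - 1)/2 < k < p`, so the
second half of the sum vanishes modulo `p⁵`. For `p = 3` the first congruence is checked directly.
-/

open Finset Ideal

/-! ### The Wilf–Zeilberger pair -/

/-- The summand `(205 k² + 160 k + 32) (-1)^k C(2k, k)^5` of both sums. -/
def quinticTerm (k : ℕ) : ℤ :=
  (205 * (k : ℤ) ^ 2 + 160 * k + 32) * (-1) ^ k * (Nat.choose (2 * k) k : ℤ) ^ 5

/-- The summand of `T(n)`, that is `F(n, k)` without its factor `8 n² C(2n, n)²`. Here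
`multichoose n k` stands for `C(n + k - 1, k)`; the truncation of `2 * n - 1` at `n = 0` is harmless
because that factor vanishes there. -/
def wzKernel (n k : ℕ) : ℤ :=
  (-1) ^ k * (Nat.multichoose n k : ℤ) ^ 2 * Nat.choose (2 * n - 1) k

/-- The first member `F` of the Wilf–Zeilberger pair. -/
def wzF (n k : ℕ) : ℤ :=
  8 * (n * Nat.centralBinom n) ^ 2 * wzKernel n k

/-- The second member `G` of the Wilf–Zeilberger pair, indexed so that `G(n, -1) = 0`. The
denominators of the rational certificate `G / F` are absorbed into the binomial coefficients, which
makes the values integers. -/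
def wzG (n k : ℕ) : ℤ :=
  4 * (-1) ^ k * (Nat.centralBinom n * Nat.multichoose (n + 1) k) ^ 2 * Nat.choose (2 * n) k *
    (30 * n ^ 2 + 11 * n + (21 * n + 8) * (k + 1))

lemma cast_succ_mul_choose_succ {R : Type*} [CommRing R] (n k : ℕ) :
    ((k : R) + 1) * Nat.choose n (k + 1) = (n - k) * Nat.choose n k := by
  rcases le_or_gt k n with h | h
  · rw [← Nat.cast_sub h]
    exact_mod_cast congrArg (Nat.cast (R := R))
      ((mul_comm _ _).trans ((Nat.choose_succ_right_eq n k).trans (mul_comm _ _)))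
  · simp [Nat.choose_eq_zero_of_lt h, Nat.choose_eq_zero_of_lt (h.trans k.lt_succ_self)]

lemma succ_mul_multichoose_succ (n k : ℕ) :
    (k + 1) * n.multichoose (k + 1) = n * (n + 1).multichoose k := by
  cases n with
  | zero => simp
  | succ n =>
    have h := Nat.choose_succ_right_eq (n + k + 1) k
    rw [show n + k + 1 - k = n + 1 by omega] at h
    rw [Nat.multichoose_eq, Nat.multichoose_eq, show n + 1 + (k + 1) - 1 = n + k + 1 by omega,
      show n + 1 + 1 + k - 1 = n + k + 1 by omega, mul_comm, h, mul_comm]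

lemma multichoose_succ_self (n : ℕ) : (n + 1).multichoose n = n.centralBinom := by
  rw [Nat.multichoose_eq, Nat.centralBinom, Nat.add_right_comm, Nat.add_sub_cancel, two_mul]

lemma centralBinom_eq_two_mul_multichoose {n : ℕ} (hn : n ≠ 0) :
    n.centralBinom = 2 * (n + 1).multichoose (n - 1) := by
  obtain ⟨m, rfl⟩ := Nat.exists_eq_succ_of_ne_zero hn
  have h : (m + 1).multichoose (m + 1) = (m + 1 + 1).multichoose m :=
    Nat.eq_of_mul_eq_mul_left m.succ_pos (succ_mul_multichoose_succ (m + 1) m)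
  rw [← multichoose_succ_self, Nat.multichoose_succ_succ, h, ← two_mul]
  rfl

lemma mul_cast_choose_pred (n k : ℕ) :
    (n : ℤ) * Nat.choose (n - 1) k = (n - k) * Nat.choose n k := by
  cases n with
  | zero => cases k <;> simp
  | succ n =>
    have h := cast_succ_mul_choose_succ (R := ℤ) (n + 1) k
    rw [← h, Nat.add_sub_cancel]
    exact_mod_cast (Nat.add_one_mul_choose_eq n k).trans (mul_comm _ _)

lemma cast_succ_mul_centralBinom_succ (n : ℕ) :
    ((n : ℤ) + 1) * (n + 1).centralBinom = 2 * (2 * n + 1) * n.centralBinom := by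
  exact_mod_cast Nat.succ_mul_centralBinom_succ n

lemma wzF_succ_sub_wzF (n k : ℕ) :
    wzF (n + 1) (k + 1) - wzF n (k + 1) = wzG n (k + 1) - wzG n k := by
  have hmulti : ((k : ℤ) + 1) * n.multichoose (k + 1) = n * (n + 1).multichoose k := by
    exact_mod_cast succ_mul_multichoose_succ n k
  have hchoose := cast_succ_mul_choose_succ (R := ℤ) (2 * n) k
  have hpred := mul_cast_choose_pred (2 * n) (k + 1)
  have hsucc : 2 * (n + 1) - 1 = 2 * n + 1 := by omega
  simp only [wzF, wzG, wzKernel, Nat.multichoose_succ_succ, hsucc, Nat.choose_succ_succ']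
  push_cast at hchoose hpred ⊢
  rw [cast_succ_mul_centralBinom_succ]
  generalize (n.centralBinom : ℤ) = c
  generalize (n.multichoose (k + 1) : ℤ) = y at hmulti ⊢
  generalize ((n + 1).multichoose k : ℤ) = x at hmulti ⊢
  generalize ((2 * n).choose k : ℤ) = v at hchoose ⊢
  generalize ((2 * n).choose (k + 1) : ℤ) = w at hchoose hpred ⊢
  have hpoly : 8 * (2 * (n : ℤ) + 1) ^ 2 * (x + y) ^ 2 * (v + w) -
      n * (2 * n - k - 1) * y ^ 2 * w =
      (x + y) ^ 2 * w * (30 * n ^ 2 + 11 * n + (21 * n + 8) * (k + 2)) +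
        x ^ 2 * v * (30 * n ^ 2 + 11 * n + (21 * n + 8) * (k + 1)) := by grobner
  linear_combination 4 * c ^ 2 * (-1) ^ (k + 1) * (hpoly - n * y ^ 2 * hpred)

lemma sum_wzF_succ_sub_wzF (n k : ℕ) :
    ∑ j ∈ range (k + 1), (wzF (n + 1) j - wzF n j) = wzG n k := by
  induction k with
  | zero =>
    rw [zero_add, sum_range_one]
    simp only [wzF, wzG, wzKernel, Nat.multichoose_zero_right, Nat.choose_zero_right]
    push_cast
    rw [cast_succ_mul_centralBinom_succ]
    ring
  | succ k ih => rw [sum_range_succ, ih, wzF_succ_sub_wzF, add_sub_cancel]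

lemma wzF_add_wzG_self (n : ℕ) : wzF n n + wzG n n = quinticTerm n := by
  have hpred := mul_cast_choose_pred (2 * n) n
  rw [← Nat.centralBinom_eq_two_mul_choose] at hpred
  simp only [wzF, wzG, wzKernel, quinticTerm, multichoose_succ_self, Nat.multichoose_eq, ← two_mul,
    ← Nat.centralBinom_eq_two_mul_choose]
  push_cast at hpred ⊢
  generalize (n.centralBinom : ℤ) = c at hpred ⊢
  generalize ((2 * n - 1).choose n : ℤ) = x at hpred ⊢
  grobner

lemma sum_quinticTerm (n : ℕ) :
    ∑ k ∈ range n, quinticTerm k =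
      8 * (n * n.centralBinom) ^ 2 * ∑ k ∈ range n, wzKernel n k := by
  suffices h : ∑ k ∈ range n, quinticTerm k = ∑ k ∈ range n, wzF n k by
    rw [h, mul_sum]
    rfl
  induction n with
  | zero => simp
  | succ n ih =>
    have h := sum_wzF_succ_sub_wzF n n
    rw [sum_sub_distrib, sum_range_succ (wzF n)] at h
    rw [sum_range_succ, ih, ← wzF_add_wzG_self]
    linear_combination -h

/-! ### Truncated expansions in a commutative ring -/

section CommRing

variable {R : Type*} [CommRing R]

lemma smodEq_span_singleton {d a b : R} : a ≡ b [SMOD span {d}] ↔ d ∣ a - b := by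
  rw [SModEq.sub_mem, mem_span_singleton]

/-- The second elementary symmetric function of `a 0, …, a (n - 1)`, the coefficient of `x²` in
`∏ (1 - x * a k)`. -/
def sumPairs (a : ℕ → R) (n : ℕ) : R := ∑ k ∈ range n, a k * ∑ j ∈ range k, a j

lemma two_mul_sumPairs (a : ℕ → R) (n : ℕ) :
    2 * sumPairs a n = (∑ k ∈ range n, a k) ^ 2 - ∑ k ∈ range n, a k ^ 2 := by
  induction n with
  | zero => simp [sumPairs]
  | succ n ih =>
    rw [sumPairs, sum_range_succ, ← sumPairs, sum_range_succ a, sum_range_succ (fun k => a k ^ 2)]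
    linear_combination ih

lemma prod_one_sub_mul_smodEq_cube (x : R) (a : ℕ → R) (n : ℕ) :
    ∏ k ∈ range n, (1 - x * a k) ≡ 1 - x * ∑ k ∈ range n, a k + x ^ 2 * sumPairs a n
      [SMOD span {x ^ 3}] := by
  induction n with
  | zero => simp [sumPairs]
  | succ n ih =>
    obtain ⟨c, hc⟩ := smodEq_span_singleton.mp ih
    refine smodEq_span_singleton.mpr ⟨c * (1 - x * a n) - sumPairs a n * a n, ?_⟩
    rw [prod_range_succ, sum_range_succ, sumPairs, sum_range_succ, ← sumPairs]
    linear_combination (1 - x * a n) * hc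

lemma prod_one_sub_mul_smodEq_sq (x : R) (a : ℕ → R) (n : ℕ) :
    ∏ k ∈ range n, (1 - x * a k) ≡ 1 - x * ∑ k ∈ range n, a k [SMOD span {x ^ 2}] := by
  obtain ⟨c, hc⟩ := smodEq_span_singleton.mp (prod_one_sub_mul_smodEq_cube x a n)
  exact smodEq_span_singleton.mpr ⟨sumPairs a n + x * c, by linear_combination hc⟩

/-- The power sum `∑_{j<n} (r j)^s`. It is used with `r j` an inverse of `j + 1`, and is then the
generalized harmonic number `H_n^{(s)}`. -/
def powSum (r : ℕ → R) (n s : ℕ) : R := ∑ j ∈ range n, r j ^ s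

lemma one_add_sum_mul_prod_smodEq (x : R) (r : ℕ → R) (n : ℕ) :
    1 + ∑ k ∈ range n, (x * r k) ^ 2 * (1 - 2 * x * r k) *
        ∏ j ∈ range k, ((1 + x * r j) ^ 2 * (1 - 2 * x * r j)) ≡
      1 + x ^ 2 * powSum r n 2 - 2 * x ^ 3 * powSum r n 3 - 3 * x ^ 4 * sumPairs (r · ^ 2) n
      [SMOD span {x ^ 5}] := by
  have hfactor (t : R) : (1 + x * t) ^ 2 * (1 - 2 * x * t) =
    1 - x ^ 2 * (3 * t ^ 2 + 2 * x * t ^ 3) := by ring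
  have hterm (k : ℕ) : (x * r k) ^ 2 * (1 - 2 * x * r k) *
        ∏ j ∈ range k, ((1 + x * r j) ^ 2 * (1 - 2 * x * r j)) ≡
      x ^ 2 * r k ^ 2 - 2 * x ^ 3 * r k ^ 3 - 3 * x ^ 4 * (r k ^ 2 * ∑ j ∈ range k, r j ^ 2)
      [SMOD span {x ^ 5}] := by
    simp only [hfactor]
    obtain ⟨c, hc⟩ := smodEq_span_singleton.mp
      (prod_one_sub_mul_smodEq_sq (x ^ 2) (fun j => 3 * r j ^ 2 + 2 * x * r j ^ 3) k)
    rw [sum_add_distrib, ← mul_sum, ← mul_sum] at hc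
    refine smodEq_span_singleton.mpr ⟨r k ^ 2 * (1 - 2 * x * r k) * (x * c -
      2 * ∑ j ∈ range k, r j ^ 3) + 6 * r k ^ 3 * ∑ j ∈ range k, r j ^ 2, ?_⟩
    linear_combination (x * r k) ^ 2 * (1 - 2 * x * r k) * hc
  have hsum := SModEq.rfl (x := (1 : R)).add (SModEq.sum fun k (_ : k ∈ range n) => hterm k)
  simpa only [powSum, sumPairs, sum_sub_distrib, ← mul_sum, ← add_sub_assoc] using hsum

/-! ### Binomial coefficients as products -/

lemma cast_multichoose_succ {r : ℕ → R} {k : ℕ} (hr : (k + 1) * r k = 1) (n : ℕ) :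
    (n.multichoose (k + 1) : R) = n * r k * (n + 1).multichoose k := by
  have h : ((k : R) + 1) * n.multichoose (k + 1) = n * (n + 1).multichoose k := by
    exact_mod_cast congrArg (Nat.cast (R := R)) (succ_mul_multichoose_succ n k)
  linear_combination r k * h - n.multichoose (k + 1) * hr

lemma prod_one_add_mul_inv {r : ℕ → R} {k : ℕ} (hr : ∀ j < k, (j + 1) * r j = 1) (n : ℕ) :
    ∏ j ∈ range k, (1 + n * r j) = (n + 1).multichoose k := by
  induction k with
  | zero => simp
  | succ k ih =>
    rw [prod_range_succ, ih fun j hj => hr j (hj.trans k.lt_succ_self), Nat.multichoose_succ_succ,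
      Nat.cast_add, cast_multichoose_succ (hr k k.lt_succ_self)]
    ring

lemma prod_one_sub_mul_inv {r : ℕ → R} {k : ℕ} (hr : ∀ j < k, (j + 1) * r j = 1) {n : ℕ}
    (hn : n ≠ 0) : ∏ j ∈ range k, (1 - n * r j) = (-1) ^ k * (n - 1).choose k := by
  obtain ⟨n, rfl⟩ := Nat.exists_eq_succ_of_ne_zero hn
  induction k with
  | zero => simp
  | succ k ih =>
    rw [prod_range_succ, ih fun j hj => hr j (hj.trans k.lt_succ_self)]
    have h := cast_succ_mul_choose_succ (R := R) n k
    push_cast [Nat.add_sub_cancel]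
    linear_combination (-1) ^ k * (r k * h - (n.choose (k + 1) + n.choose k) * hr k k.lt_succ_self)

lemma centralBinom_eq_two_mul_prod {r : ℕ → R} {n : ℕ} (hr : ∀ j < n - 1, (j + 1) * r j = 1)
    (hodd : Odd n) :
    (n.centralBinom : R) = 2 * ∏ j ∈ range (n - 1), (1 - n ^ 2 * r j ^ 2) := by
  have hsub : ∏ j ∈ range (n - 1), (1 - n * r j) = 1 := by
    rw [prod_one_sub_mul_inv hr hodd.pos.ne', (Nat.Odd.sub_odd hodd odd_one).neg_one_pow,
      Nat.choose_self, Nat.cast_one, one_mul]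
  calc (n.centralBinom : R)
    _ = 2 * ((∏ j ∈ range (n - 1), (1 + n * r j)) * ∏ j ∈ range (n - 1), (1 - n * r j)) := by
      rw [hsub, mul_one, prod_one_add_mul_inv hr,
        centralBinom_eq_two_mul_multichoose hodd.pos.ne', Nat.cast_mul, Nat.cast_ofNat]
    _ = 2 * ∏ j ∈ range (n - 1), (1 - n ^ 2 * r j ^ 2) := by
      rw [← prod_mul_distrib]
      congr! 2
      ring

lemma centralBinom_smodEq {r : ℕ → R} {n : ℕ} (hr : ∀ j < n - 1, (j + 1) * r j = 1)
    (hodd : Odd n) :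
    (n.centralBinom : R) ≡
      2 * (1 - n ^ 2 * powSum r (n - 1) 2 + n ^ 4 * sumPairs (r · ^ 2) (n - 1))
      [SMOD span {(n : R) ^ 6}] := by
  have h := prod_one_sub_mul_smodEq_cube ((n : R) ^ 2) (r · ^ 2) (n - 1)
  rw [← pow_mul, ← pow_mul] at h
  rw [centralBinom_eq_two_mul_prod hr hodd]
  exact SModEq.rfl.mul h

lemma sum_wzKernel_eq {r : ℕ → R} {n : ℕ} (hr : ∀ j < n - 1, (j + 1) * r j = 1) (hn : n ≠ 0) :
    ((∑ k ∈ range n, wzKernel n k : ℤ) : R) =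
      1 + ∑ k ∈ range (n - 1), (n * r k) ^ 2 * (1 - 2 * n * r k) *
        ∏ j ∈ range k, ((1 + n * r j) ^ 2 * (1 - 2 * n * r j)) := by
  rw [← Nat.sub_one_add_one hn, sum_range_succ', Nat.sub_one_add_one hn, add_comm]
  push_cast
  congr 1
  · simp [wzKernel]
  refine sum_congr rfl fun k hk => ?_
  have hk' := mem_range.mp hk
  have hchoose := prod_one_sub_mul_inv (k := k + 1) (fun j hj => hr j (by omega))
    (mul_ne_zero two_ne_zero hn)
  push_cast at hchoose
  rw [prod_mul_distrib, prod_pow, prod_one_add_mul_inv fun j hj => hr j (hj.trans hk')]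
  simp only [wzKernel]
  push_cast
  rw [cast_multichoose_succ (hr k hk'), mul_right_comm, ← hchoose, prod_range_succ]
  ring

lemma sum_wzKernel_smodEq {r : ℕ → R} {n : ℕ} (hr : ∀ j < n - 1, (j + 1) * r j = 1)
    (hn : n ≠ 0) :
    ((∑ k ∈ range n, wzKernel n k : ℤ) : R) ≡
      1 + n ^ 2 * powSum r (n - 1) 2 - 2 * n ^ 3 * powSum r (n - 1) 3 -
        3 * n ^ 4 * sumPairs (r · ^ 2) (n - 1) [SMOD span {(n : R) ^ 5}] := by
  rw [sum_wzKernel_eq hr hn]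
  exact one_add_sum_mul_prod_smodEq (n : R) r (n - 1)

/-! ### Harmonic sums -/

lemma inv_add_inv_reflect {r : ℕ → R} {n j : ℕ} (hr : ∀ j < n - 1, (j + 1) * r j = 1)
    (hj : j < n - 1) : r j + r (n - 1 - 1 - j) = n * r j * r (n - 1 - 1 - j) := by
  have h : ((n - 1 - 1 - j : ℕ) : R) + 1 = n - (j + 1) := by
    rw [eq_sub_iff_add_eq]
    norm_cast
    congr 1
    omega
  have hrefl := hr (n - 1 - 1 - j) (by omega)
  rw [h] at hrefl
  linear_combination -r (n - 1 - 1 - j) * hr j hj - r j * hrefl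

lemma two_mul_powSum (r : ℕ → R) (n s : ℕ) :
    2 * powSum r n s = ∑ j ∈ range n, (r j ^ s + r (n - 1 - j) ^ s) := by
  rw [sum_add_distrib, sum_range_reflect (r · ^ s), powSum, two_mul]

lemma two_mul_powSum_one_smodEq {r : ℕ → R} {n : ℕ} (hr : ∀ j < n - 1, (j + 1) * r j = 1) :
    2 * powSum r (n - 1) 1 ≡ -(n * powSum r (n - 1) 2 + n ^ 2 * powSum r (n - 1) 3 +
      n ^ 3 * powSum r (n - 1) 4) [SMOD span {(n : R) ^ 4}] := by
  rw [two_mul_powSum]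
  simp only [powSum, mul_sum, ← sum_add_distrib, ← sum_neg_distrib]
  refine SModEq.sum fun j hj => smodEq_span_singleton.mpr ⟨r j ^ 4 * r (n - 1 - 1 - j), ?_⟩
  linear_combination (1 + n * r j + n ^ 2 * r j ^ 2 + n ^ 3 * r j ^ 3) *
    inv_add_inv_reflect hr (mem_range.mp hj)

lemma two_mul_powSum_three_smodEq {r : ℕ → R} {n : ℕ} (hr : ∀ j < n - 1, (j + 1) * r j = 1) :
    2 * powSum r (n - 1) 3 ≡ -(3 * n * powSum r (n - 1) 4) [SMOD span {(n : R) ^ 2}] := by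
  rw [two_mul_powSum]
  simp only [powSum, mul_sum, ← sum_neg_distrib]
  refine SModEq.sum fun j hj => smodEq_span_singleton.mpr ?_
  have h := inv_add_inv_reflect hr (mem_range.mp hj)
  generalize r (n - 1 - 1 - j) = y at h ⊢
  generalize r j = x at h ⊢
  exact ⟨x ^ 2 * y * (y ^ 2 - 2 * x * y + 3 * x ^ 2), by
      linear_combination (x ^ 2 - x * y + y ^ 2 + n * x * (y ^ 2 - 2 * x * y + 3 * x ^ 2)) * h⟩

lemma dvd_sumPairs_sq {r : ℕ → R} {n : ℕ} {d : R} (h2 : IsUnit (2 : R)) (hd2 : d ∣ powSum r n 2)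
    (hd4 : d ∣ powSum r n 4) : d ∣ sumPairs (r · ^ 2) n := by
  rw [← h2.dvd_mul_left, two_mul_sumPairs]
  simp only [← pow_mul]
  exact dvd_sub (dvd_pow hd2 two_ne_zero) hd4

lemma sq_dvd_powSum_three {r : ℕ → R} {n : ℕ} (hr : ∀ j < n - 1, (j + 1) * r j = 1)
    (h2 : IsUnit (2 : R)) (hn4 : (n : R) ∣ powSum r (n - 1) 4) :
    (n : R) ^ 2 ∣ powSum r (n - 1) 3 := by
  obtain ⟨a, ha⟩ := hn4
  obtain ⟨b, hb⟩ := smodEq_span_singleton.mp (two_mul_powSum_three_smodEq hr)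
  rw [← h2.dvd_mul_left]
  exact ⟨b - 3 * a, by linear_combination hb - 3 * n * ha⟩

/-! ### The congruences over a commutative ring -/

lemma sq_centralBinom_mul_sum_wzKernel_smodEq_four {r : ℕ → R} {n : ℕ}
    (hr : ∀ j < n - 1, (j + 1) * r j = 1) (hodd : Odd n) (hn2 : (n : R) ∣ powSum r (n - 1) 2) :
    (n.centralBinom : R) ^ 2 * (∑ k ∈ range n, wzKernel n k : ℤ) ≡ 4
      [SMOD span {(n : R) ^ 3}] := by
  obtain ⟨a, ha⟩ := hn2
  have hbinom : (n.centralBinom : R) ≡ 2 [SMOD span {(n : R) ^ 3}] := by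
    obtain ⟨b, hb⟩ := smodEq_span_singleton.mp (centralBinom_smodEq hr hodd)
    exact smodEq_span_singleton.mpr ⟨-2 * a + 2 * n * sumPairs (r · ^ 2) (n - 1) + n ^ 3 * b, by
      linear_combination hb - 2 * n ^ 2 * ha⟩
  have hkernel : ((∑ k ∈ range n, wzKernel n k : ℤ) : R) ≡ 1 [SMOD span {(n : R) ^ 3}] := by
    obtain ⟨b, hb⟩ := smodEq_span_singleton.mp (sum_wzKernel_smodEq hr hodd.pos.ne')
    exact smodEq_span_singleton.mpr ⟨a - 2 * powSum r (n - 1) 3 -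
      3 * n * sumPairs (r · ^ 2) (n - 1) + n ^ 2 * b, by linear_combination hb + n ^ 2 * ha⟩
  convert (hbinom.pow 2).mul hkernel using 1
  norm_num

lemma sq_centralBinom_mul_sum_wzKernel_smodEq {r : ℕ → R} {n : ℕ}
    (hr : ∀ j < n - 1, (j + 1) * r j = 1) (hodd : Odd n) (h2 : IsUnit (2 : R))
    (hn2 : (n : R) ∣ powSum r (n - 1) 2) (hn4 : (n : R) ∣ powSum r (n - 1) 4) :
    (n.centralBinom : R) ^ 2 * (∑ k ∈ range n, wzKernel n k : ℤ) ≡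
      4 + 8 * n * powSum r (n - 1) 1 [SMOD span {(n : R) ^ 5}] := by
  obtain ⟨a, ha⟩ := hn2
  obtain ⟨c, hc⟩ := sq_dvd_powSum_three hr h2 hn4
  obtain ⟨e, he⟩ := dvd_sumPairs_sq h2 ⟨a, ha⟩ hn4
  obtain ⟨d, hd⟩ := hn4
  have hbinom : (n.centralBinom : R) ≡ 2 * (1 - n ^ 3 * a) [SMOD span {(n : R) ^ 5}] := by
    obtain ⟨b, hb⟩ := smodEq_span_singleton.mp (centralBinom_smodEq hr hodd)
    exact smodEq_span_singleton.mpr ⟨2 * e + n * b, by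
      linear_combination hb - 2 * n ^ 2 * ha + 2 * n ^ 4 * he⟩
  have hkernel : ((∑ k ∈ range n, wzKernel n k : ℤ) : R) ≡ 1 + n ^ 3 * a
      [SMOD span {(n : R) ^ 5}] := by
    obtain ⟨b, hb⟩ := smodEq_span_singleton.mp (sum_wzKernel_smodEq hr hodd.pos.ne')
    exact smodEq_span_singleton.mpr ⟨b - 2 * c - 3 * e, by
      linear_combination hb + n ^ 2 * ha - 2 * n ^ 3 * hc - 3 * n ^ 4 * he⟩
  calc (n.centralBinom : R) ^ 2 * (∑ k ∈ range n, wzKernel n k : ℤ)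
    _ ≡ (2 * (1 - n ^ 3 * a)) ^ 2 * (1 + n ^ 3 * a) [SMOD span {(n : R) ^ 5}] :=
      (hbinom.pow 2).mul hkernel
    _ ≡ 4 - 4 * n ^ 3 * a [SMOD span {(n : R) ^ 5}] :=
      smodEq_span_singleton.mpr ⟨-4 * n * a ^ 2 * (1 - n ^ 3 * a), by ring⟩
    _ ≡ 4 + 8 * n * powSum r (n - 1) 1 [SMOD span {(n : R) ^ 5}] := by
      obtain ⟨b, hb⟩ := smodEq_span_singleton.mp (two_mul_powSum_one_smodEq hr)
      exact smodEq_span_singleton.mpr ⟨4 * (c + d - b), by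
        linear_combination 4 * n ^ 2 * ha + 4 * n ^ 3 * hc + 4 * n ^ 4 * hd - 4 * n * hb⟩

lemma sum_quinticTerm_smodEq_pow_five {r : ℕ → R} {n : ℕ}
    (hr : ∀ j < n - 1, (j + 1) * r j = 1) (hodd : Odd n) (hn2 : (n : R) ∣ powSum r (n - 1) 2) :
    ((∑ k ∈ range n, quinticTerm k : ℤ) : R) ≡ 32 * n ^ 2 [SMOD span {(n : R) ^ 5}] := by
  obtain ⟨c, hc⟩ :=
    smodEq_span_singleton.mp (sq_centralBinom_mul_sum_wzKernel_smodEq_four hr hodd hn2)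
  rw [sum_quinticTerm, Int.cast_mul]
  push_cast at hc ⊢
  exact smodEq_span_singleton.mpr ⟨8 * c, by linear_combination 8 * (n : R) ^ 2 * hc⟩

lemma sum_quinticTerm_smodEq_pow_seven {r : ℕ → R} {n : ℕ}
    (hr : ∀ j < n - 1, (j + 1) * r j = 1) (hodd : Odd n) (h2 : IsUnit (2 : R))
    (hn2 : (n : R) ∣ powSum r (n - 1) 2) (hn4 : (n : R) ∣ powSum r (n - 1) 4) :
    ((∑ k ∈ range n, quinticTerm k : ℤ) : R) ≡ 32 * n ^ 2 + 64 * n ^ 3 * powSum r (n - 1) 1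
      [SMOD span {(n : R) ^ 7}] := by
  obtain ⟨c, hc⟩ :=
    smodEq_span_singleton.mp (sq_centralBinom_mul_sum_wzKernel_smodEq hr hodd h2 hn2 hn4)
  rw [sum_quinticTerm, Int.cast_mul]
  push_cast at hc ⊢
  exact smodEq_span_singleton.mpr ⟨8 * c, by linear_combination 8 * (n : R) ^ 2 * hc⟩

/-! ### Specialization to the p-adic integers -/

lemma sum_range_natCast_zmod {M : Type*} [AddCommMonoid M] (n : ℕ) [NeZero n] (f : ZMod n → M) :
    ∑ j ∈ range n, f j = ∑ x, f x :=
  sum_nbij' (fun j => (j : ZMod n)) ZMod.val (fun _ _ => mem_univ _)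
    (fun x _ => mem_range.mpr x.val_lt) (fun _ hj => ZMod.val_cast_of_lt (mem_range.mp hj))
    (fun x _ => ZMod.natCast_zmod_val x) fun _ _ => rfl

variable {p : ℕ} [hp : Fact p.Prime]

lemma map_powSum_eq_zero {r : ℕ → R} (hr : ∀ j < p - 1, (j + 1) * r j = 1) (f : R →+* ZMod p)
    {s : ℕ} (hs : s ≠ 0) (hsp : s < p - 1) : f (powSum r (p - 1) s) = 0 := by
  have hinv : ∀ j ∈ range (p - 1), f (r j ^ s) = ((j + 1 : ℕ) : ZMod p)⁻¹ ^ s := by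
    intro j hj
    have h := congrArg f (hr j (mem_range.mp hj))
    rw [map_mul, map_one, map_add, map_one, map_natCast] at h
    rw [map_pow, eq_inv_of_mul_eq_one_right h, Nat.cast_succ]
  calc f (powSum r (p - 1) s)
    _ = ∑ j ∈ range (p - 1), ((j + 1 : ℕ) : ZMod p)⁻¹ ^ s := by
      rw [powSum, map_sum, sum_congr rfl hinv]
    _ = ∑ j ∈ range p, (j : ZMod p)⁻¹ ^ s := by
      have h := sum_range_succ' (fun j : ℕ => (j : ZMod p)⁻¹ ^ s) (p - 1)
      rw [Nat.sub_one_add_one hp.out.ne_zero, Nat.cast_zero, inv_zero, zero_pow hs, add_zero] at h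
      exact h.symm
    _ = ∑ x : ZMod p, x⁻¹ ^ s := sum_range_natCast_zmod p (·⁻¹ ^ s)
    _ = ∑ x : ZMod p, x ^ s := Equiv.sum_comp (Equiv.inv (ZMod p)) (· ^ s)
    _ = 0 := FiniteField.sum_pow_lt_card_sub_one (ZMod p) s (by rwa [ZMod.card])

end CommRing

/-- The inverse of `j + 1` in `ℤ_[p]`, making the harmonic sums available as `powSum`s of `p`-adic
integers. It takes the value `0` when `p` divides `j + 1`. -/
noncomputable def padicInvSucc (p : ℕ) [Fact p.Prime] (j : ℕ) : ℤ_[p] :=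
  PadicInt.inv ((j : ℤ_[p]) + 1)

section Padic

variable {p : ℕ} [hp : Fact p.Prime]

lemma mul_padicInvSucc {j : ℕ} (hj : j < p - 1) : ((j : ℤ_[p]) + 1) * padicInvSucc p j = 1 := by
  refine PadicInt.mul_inv ?_
  rw [← Nat.cast_succ, PadicInt.norm_natCast_eq_one_iff]
  exact Nat.coprime_of_lt_prime j.succ_ne_zero (by omega) hp.out

lemma coe_padicInvSucc {j : ℕ} (hj : j < p - 1) :
    (padicInvSucc p j : ℚ_[p]) = 1 / ((j : ℚ_[p]) + 1) := by
  have h := congrArg (fun x : ℤ_[p] => (x : ℚ_[p])) (mul_padicInvSucc hj)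
  push_cast at h
  exact eq_one_div_of_mul_eq_one_right h

lemma coe_powSum_padicInvSucc_one :
    ((powSum (padicInvSucc p) (p - 1) 1 : ℤ_[p]) : ℚ_[p]) =
      ∑ k ∈ range (p - 1), 1 / ((k : ℚ_[p]) + 1) := by
  rw [powSum, PadicInt.coe_sum]
  exact sum_congr rfl fun j hj => by rw [pow_one, coe_padicInvSucc (mem_range.mp hj)]

lemma dvd_powSum_padicInvSucc {s : ℕ} (hs : s ≠ 0) (hsp : s < p - 1) :
    (p : ℤ_[p]) ∣ powSum (padicInvSucc p) (p - 1) s := by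
  rw [← mem_span_singleton, ← PadicInt.maximalIdeal_eq_span_p, ← PadicInt.ker_toZMod,
    RingHom.mem_ker]
  exact map_powSum_eq_zero (fun j => mul_padicInvSucc) PadicInt.toZMod hs hsp

lemma isUnit_two_padicInt (hp2 : p ≠ 2) : IsUnit (2 : ℤ_[p]) := by
  rw [PadicInt.isUnit_iff, ← Nat.cast_ofNat, PadicInt.norm_natCast_eq_one_iff]
  exact (Nat.coprime_primes hp.out Nat.prime_two).mpr hp2

lemma norm_sum_quinticTerm_sub_le (hp5 : 5 < p) :
    ‖((∑ k ∈ range p, quinticTerm k : ℤ) : ℚ_[p]) - 32 * p ^ 2 -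
      64 * p ^ 3 * ∑ k ∈ range (p - 1), 1 / ((k : ℚ_[p]) + 1)‖ ≤ (p : ℝ) ^ (-7 : ℤ) := by
  have h := sum_quinticTerm_smodEq_pow_seven (fun j => mul_padicInvSucc)
    (hp.out.odd_of_ne_two (by omega)) (isUnit_two_padicInt (by omega))
    (dvd_powSum_padicInvSucc two_ne_zero (by omega))
    (dvd_powSum_padicInvSucc four_ne_zero (by omega))
  rw [SModEq.sub_mem] at h
  have hnorm := (PadicInt.norm_le_pow_iff_mem_span_pow _ 7).mpr h
  rw [PadicInt.norm_def, ← sub_sub] at hnorm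
  rw [← coe_powSum_padicInvSucc_one]
  exact_mod_cast hnorm

lemma pow_five_dvd_quinticTerm {k : ℕ} (hk : (p - 1) / 2 < k) (hkp : k < p) :
    (p : ℤ) ^ 5 ∣ quinticTerm k := by
  have h : p ∣ (2 * k).choose k := two_mul k ▸ hp.out.dvd_choose_add hkp hkp (by omega)
  exact (pow_dvd_pow_of_dvd (Int.natCast_dvd_natCast.mpr h) 5).mul_left _

lemma sum_quinticTerm_modEq (hp3 : 3 < p) :
    ∑ k ∈ range p, quinticTerm k ≡ 32 * p ^ 2 [ZMOD p ^ 5] := by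
  have h := sum_quinticTerm_smodEq_pow_five (fun j => mul_padicInvSucc)
    (hp.out.odd_of_ne_two (by omega)) (dvd_powSum_padicInvSucc (p := p) two_ne_zero (by omega))
  rw [smodEq_span_singleton] at h
  refine (Int.modEq_iff_dvd.mpr ((PadicInt.pow_p_dvd_int_iff 5 _).mp ?_)).symm
  exact_mod_cast h

lemma sum_quinticTerm_half_modEq (hp3 : 3 < p) :
    ∑ k ∈ range ((p - 1) / 2 + 1), quinticTerm k ≡ 32 * p ^ 2 [ZMOD p ^ 5] := by
  have htail : (p : ℤ) ^ 5 ∣ ∑ k ∈ Ico ((p - 1) / 2 + 1) p, quinticTerm k :=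
    dvd_sum fun k hk => pow_five_dvd_quinticTerm (mem_Ico.mp hk).1 (mem_Ico.mp hk).2
  have hfull := sum_quinticTerm_modEq hp3
  rw [← sum_range_add_sum_Ico _ (show (p - 1) / 2 + 1 ≤ p by omega)] at hfull
  exact (Int.ModEq.add_right_cancel (Int.modEq_zero_iff_dvd.mpr htail)) (by rwa [add_zero])

end Padic

theorem stmt18 (p : ℕ) [Fact p.Prime] (hodd : Odd p) :
    (p ≠ 5 →
      ‖(((∑ k ∈ Finset.range p,
              (205 * (k : ℚ) ^ 2 + 160 * k + 32) * (-1) ^ k *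
                (Nat.choose (2 * k) k : ℚ) ^ 5) -
            32 * (p : ℚ) ^ 2 -
            64 * (p : ℚ) ^ 3 * ∑ k ∈ Finset.range (p - 1), (1 : ℚ) / ((k : ℚ) + 1) :
          ℚ) : ℚ_[p])‖ ≤ (p : ℝ) ^ (-7 : ℤ)) ∧
    (3 < p →
      (∑ k ∈ Finset.range ((p - 1) / 2 + 1),
          (205 * (k : ℤ) ^ 2 + 160 * k + 32) * (-1) ^ k *
            (Nat.choose (2 * k) k : ℤ) ^ 5)
        ≡ 32 * (p : ℤ) ^ 2 [ZMOD ((p : ℤ) ^ 5)]) := by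
  refine ⟨fun hp5 => ?_, sum_quinticTerm_half_modEq⟩
  rcases lt_or_ge 5 p with h | h
  · have hnorm := norm_sum_quinticTerm_sub_le h
    simp only [quinticTerm] at hnorm
    push_cast at hnorm ⊢
    exact hnorm
  · obtain rfl : p = 3 := by
      have hp := Fact.out (p := p.Prime)
      interval_cases p <;> simp_all +decide
    have hvalue : ‖((3 ^ 7 * 4160 : ℤ) : ℚ_[3])‖ ≤ ((3 : ℕ) : ℝ) ^ (-7 : ℤ) :=
      (Padic.norm_int_le_pow_iff_dvd (3 ^ 7 * 4160) 7).mpr (dvd_mul_right _ _)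
    refine le_of_eq_of_le (congrArg norm ?_) hvalue
    norm_num [sum_range_succ, Nat.choose]
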